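/- arXiv:2405.17714 — 2 statements merged into one kernel-verified Lean document; each statement's English description precedes it below -/
import Mathlib

section
/- Let F = (f₁₁, f₁₂; f₁₂, f₂₂) be a symmetric 2-tensor field on ℝ² of class C³ with compact support which is incompressible, i.e. δF = (∂₁f₁₁ + ∂₂f₁₂, ∂₁f₁₂ + ∂₂f₂₂) = (0,0) everywhere, and let μ > 0. If the exponential X-ray transform X_μF(x,θ) = ∫_ℝ ⟨F(x+tθ)θ,θ⟩ e^{μt} dt vanishes for every x ∈ ℝ² and every unit vector θ, then F = 0 identically. (Equivalently, the data X_μF uniquely determines an incompressible symmetric 2-tensor field in this class.) -/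
/-! The proof is a Fourier-analytic one. Let `f̂(ζ) = ∫ f(x) e^{-i ζ·x} dx`, an entire function of
`ζ ∈ ℂ²` when `f` is compactly supported. Integrating the data over the lines of direction
`θ = (cos φ, sin φ)` against `e^{-iσs}` gives the slice identity (`slice_zero`)

  `f̂₁₁(ζ) cos² φ + 2 f̂₁₂(ζ) cos φ sin φ + f̂₂₂(ζ) sin² φ = 0`, where `ζ = σ θ^⊥ + i μ θ`,

for all real `σ`, `φ`. For fixed `σ` the left side is entire in `φ` (`differentiable_ft`), so the
identity persists for complex `φ`. Every nonzero real `ξ` has the form `σ θ^⊥ + i μ θ` with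
`σ = √(|ξ|² + μ²)` and a suitable complex angle (`exists_angle`). At such a `ξ` incompressibility
reads `F̂(ξ) ξ = 0` (`ft_fderiv`), and as `ξ^⊥·θ = -σ ≠ 0` for the complexified `θ`, the three linear
equations force `F̂(ξ) = 0`. Fourier inversion (`eq_zero_of_ft`) then gives `F = 0`. -/

open Complex MeasureTheory

/-- First partial derivative of a complex-valued function on `ℝ × ℝ`. -/
noncomputable def pd1C (v : ℝ × ℝ → ℂ) (x : ℝ × ℝ) : ℂ := fderiv ℝ v x (1, 0)

/-- Second partial derivative of a complex-valued function on `ℝ × ℝ`. -/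
noncomputable def pd2C (v : ℝ × ℝ → ℂ) (x : ℝ × ℝ) : ℂ := fderiv ℝ v x (0, 1)

/-- First partial derivative of a real-valued function on `ℝ × ℝ`. -/
noncomputable def pd1R (v : ℝ × ℝ → ℝ) (x : ℝ × ℝ) : ℝ := fderiv ℝ v x (1, 0)

/-- Second partial derivative of a real-valued function on `ℝ × ℝ`. -/
noncomputable def pd2R (v : ℝ × ℝ → ℝ) (x : ℝ × ℝ) : ℝ := fderiv ℝ v x (0, 1)

/-- Wirtinger derivative `∂ = (∂₁ - i ∂₂)/2`. -/
noncomputable def wd (v : ℝ × ℝ → ℂ) (x : ℝ × ℝ) : ℂ :=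
  (pd1C v x - Complex.I * pd2C v x) / 2

/-- Conjugate Wirtinger derivative `∂̄ = (∂₁ + i ∂₂)/2`. -/
noncomputable def wdbar (v : ℝ × ℝ → ℂ) (x : ℝ × ℝ) : ℂ :=
  (pd1C v x + Complex.I * pd2C v x) / 2

/-- Laplacian of a complex-valued function on `ℝ × ℝ`. -/
noncomputable def lapC (v : ℝ × ℝ → ℂ) (x : ℝ × ℝ) : ℂ :=
  pd1C (pd1C v) x + pd2C (pd2C v) x

/-- Laplacian of a real-valued function on `ℝ × ℝ`. -/
noncomputable def lapR (v : ℝ × ℝ → ℝ) (x : ℝ × ℝ) : ℝ :=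
  pd1R (pd1R v) x + pd2R (pd2R v) x

/-- The Fourier–Laplace transform `∫ f(x) e^{-i ζ·x} dx` at the complex frequency
`ζ = (z₁, z₂)`. -/
noncomputable def ft (f : ℝ × ℝ → ℝ) (z₁ z₂ : ℂ) : ℂ :=
  ∫ x : ℝ × ℝ, (f x : ℂ) * cexp (-I * (z₁ * x.1 + z₂ * x.2))

lemma integrable_mul_of_hasCompactSupport {f : ℝ × ℝ → ℝ} (hf : Continuous f)
    (hc : HasCompactSupport f) {g : ℝ × ℝ → ℂ} (hg : Continuous g) :
    Integrable (fun x => (f x : ℂ) * g x) := by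
  apply Continuous.integrable_of_hasCompactSupport (by fun_prop)
  exact (hc.comp_left (g := fun r : ℝ => (r : ℂ)) (by simp)).mul_right

lemma differentiable_ft {f : ℝ × ℝ → ℝ} (hf : Continuous f) (hc : HasCompactSupport f)
    {Z₁ Z₂ Z₁' Z₂' : ℂ → ℂ} (h₁ : ∀ w, HasDerivAt Z₁ (Z₁' w) w)
    (h₂ : ∀ w, HasDerivAt Z₂ (Z₂' w) w) (h₁' : Continuous Z₁') (h₂' : Continuous Z₂') :
    Differentiable ℂ (fun w => ft f (Z₁ w) (Z₂ w)) := by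
  intro w₀
  have c₁ : Continuous Z₁ := continuous_iff_continuousAt.2 fun w => (h₁ w).continuousAt
  have c₂ : Continuous Z₂ := continuous_iff_continuousAt.2 fun w => (h₂ w).continuousAt
  let G : ℂ × (ℝ × ℝ) → ℂ := fun p =>
    cexp (-I * (Z₁ p.1 * p.2.1 + Z₂ p.1 * p.2.2)) * (-I * (Z₁' p.1 * p.2.1 + Z₂' p.1 * p.2.2))
  have hG : Continuous G := by fun_prop
  obtain ⟨C, hC⟩ := ((isCompact_closedBall w₀ (1 : ℝ)).prod hc.isCompact).exists_bound_of_continuousOn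
    hG.continuousOn
  have key := hasDerivAt_integral_of_dominated_loc_of_deriv_le (𝕜 := ℂ) (μ := volume) (x₀ := w₀)
    (s := Metric.closedBall w₀ 1)
    (F := fun w (x : ℝ × ℝ) => (f x : ℂ) * cexp (-I * (Z₁ w * x.1 + Z₂ w * x.2)))
    (F' := fun w x => (f x : ℂ) * G (w, x)) (bound := fun x => ‖f x‖ * C)
    (Metric.closedBall_mem_nhds w₀ one_pos)
    (Filter.Eventually.of_forall fun w => by
      exact (integrable_mul_of_hasCompactSupport hf hc (by fun_prop)).aestronglyMeasurable)
    (integrable_mul_of_hasCompactSupport hf hc (by fun_prop))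
    (integrable_mul_of_hasCompactSupport hf hc (by fun_prop)).aestronglyMeasurable
    (Filter.Eventually.of_forall fun x w hw => by
      by_cases hx : f x = 0
      · simp [hx]
      · rw [norm_mul, Complex.norm_real]
        gcongr
        exact hC (w, x) ⟨hw, subset_tsupport f hx⟩)
    ((hf.integrable_of_hasCompactSupport hc).norm.mul_const C)
    (Filter.Eventually.of_forall fun x w hw => by
      exact ((((h₁ w).mul_const _).add ((h₂ w).mul_const _)).const_mul (-I)).cexp.const_mul _)
  exact key.2.differentiableAt

lemma ft_fderiv {f : ℝ × ℝ → ℝ} (hf : ContDiff ℝ 1 f) (hc : HasCompactSupport f)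
    (v : ℝ × ℝ) (z₁ z₂ : ℂ) :
    ft (fun x => fderiv ℝ f x v) z₁ z₂ = I * (z₁ * v.1 + z₂ * v.2) * ft f z₁ z₂ := by
  let L : ℝ × ℝ →L[ℝ] ℂ :=
    ((-I * z₁) • (ofRealCLM.comp (ContinuousLinearMap.fst ℝ ℝ ℝ))) +
    ((-I * z₂) • (ofRealCLM.comp (ContinuousLinearMap.snd ℝ ℝ ℝ)))
  have hL : ∀ x : ℝ × ℝ, -I * (z₁ * x.1 + z₂ * x.2) = L x := by
    intro x; simp [L]; ring
  have hE : ∀ x, HasFDerivAt (fun x : ℝ × ℝ => cexp (L x)) (cexp (L x) • L) x :=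
    fun x => L.hasFDerivAt.cexp
  have hF : ∀ x, HasFDerivAt (fun x => (f x : ℂ)) (ofRealCLM.comp (fderiv ℝ f x)) x := fun x =>
    ofRealCLM.hasFDerivAt.comp x ((hf.differentiable one_ne_zero) x).hasFDerivAt
  have hdc : Continuous (fun x => fderiv ℝ f x v) :=
    (hf.continuous_fderiv one_ne_zero).clm_apply continuous_const
  have hds : HasCompactSupport (fun x => fderiv ℝ f x v) := hc.fderiv_apply ℝ v
  have := integral_mul_fderiv_eq_neg_fderiv_mul_of_integrable (μ := (volume : Measure (ℝ × ℝ)))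
    (𝕜 := ℂ) (f := fun x => (f x : ℂ)) (g := fun x => cexp (L x)) (v := v)
    (by simpa [(hF _).fderiv] using
          integrable_mul_of_hasCompactSupport hdc hds (g := fun x => cexp (L x)) (by fun_prop))
    (by simpa [(hE _).fderiv] using
          integrable_mul_of_hasCompactSupport hf.continuous hc
            (g := fun x => cexp (L x) * L v) (by fun_prop))
    (integrable_mul_of_hasCompactSupport hf.continuous hc (by fun_prop))
    (fun x _ => (hF x).differentiableAt) (fun x _ => (hE x).differentiableAt)
  simp only [(hF _).fderiv, (hE _).fderiv, smul_apply,
    ContinuousLinearMap.comp_apply, smul_eq_mul, ofRealCLM_apply, ← mul_assoc] at this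
  rw [integral_mul_const] at this
  simp only [ft, hL]
  rw [eq_neg_iff_add_eq_zero, add_comm, ← eq_neg_iff_add_eq_zero] at this
  rw [this, ← hL v]
  ring

/-- Uniqueness for the Fourier transform. The frequency `0` may be left out, being a null set in
the inversion formula. -/
lemma eq_zero_of_ft {f : ℝ × ℝ → ℝ} (hf : Continuous f) (hc : HasCompactSupport f)
    (h : ∀ a b : ℝ, (a, b) ≠ (0, 0) → ft f a b = 0) (x : ℝ × ℝ) : f x = 0 := by
  -- `ℂ` serves as the Euclidean plane, since `ℝ × ℝ` carries the sup norm.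
  let g : ℂ → ℂ := fun z => (f (z.re, z.im) : ℂ)
  have hg : Continuous g := by fun_prop
  have hgi : Integrable g :=
    (Complex.volume_preserving_equiv_real_prod.integrable_comp_emb
      measurableEquivRealProd.measurableEmbedding (g := fun x => (f x : ℂ))).2
      (hf.integrable_of_hasCompactSupport hc).ofReal
  have hF : ∀ w : ℂ, w ≠ 0 → FourierTransform.fourier g w = 0 := by
    intro w hw
    rw [Real.fourier_eq']
    have := h (2 * Real.pi * w.re) (2 * Real.pi * w.im) (by
      intro h0
      apply hw
      simp only [Prod.mk.injEq, mul_eq_zero, Real.pi_ne_zero, or_false, false_or,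
        OfNat.ofNat_ne_zero] at h0
      exact Complex.ext h0.1 h0.2)
    rw [ft, ← Complex.volume_preserving_equiv_real_prod.integral_comp
      measurableEquivRealProd.measurableEmbedding] at this
    rw [← this]
    congr 1 with z
    simp only [g, measurableEquivRealProd_apply, smul_eq_mul, Complex.inner,
      Complex.mul_re, Complex.conj_re, Complex.conj_im]
    rw [mul_comm]
    congr 2
    push_cast
    ring
  have hF0 : FourierTransform.fourier g =ᵐ[volume] 0 := by
    filter_upwards [compl_mem_ae_iff.2 (measure_singleton (0 : ℂ))] with w hw
    exact hF w hw
  have hinv := hg.fourierInv_fourier_eq hgi ((integrable_zero _ _ _).congr hF0.symm)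
  have h1 : g ⟨x.1, x.2⟩ = 0 := by
    rw [← hinv, Real.fourierInv_eq']
    apply integral_eq_zero_of_ae
    filter_upwards [hF0] with w hw
    simp [hw]
  simpa [g] using h1

/-- The rotation of `ℝ × ℝ` by the angle `φ` is a volume-preserving measurable equivalence. -/
lemma exists_rotation (φ : ℝ) : ∃ e : (ℝ × ℝ) ≃ᵐ (ℝ × ℝ), MeasurePreserving e ∧
    ∀ p : ℝ × ℝ, e p = (p.1 * Real.cos φ - p.2 * Real.sin φ,
      p.1 * Real.sin φ + p.2 * Real.cos φ) := by
  refine ⟨(measurableEquivRealProd.symm.trans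
    (rotation (Circle.exp φ)).toHomeomorph.toMeasurableEquiv).trans measurableEquivRealProd,
    ?_, ?_⟩
  · exact (Complex.volume_preserving_equiv_real_prod.comp
      ((rotation (Circle.exp φ)).measurePreserving)).comp
      Complex.volume_preserving_equiv_real_prod.symm
  · intro p
    ext <;> simp [measurableEquivRealProd_apply, Circle.coe_exp, Complex.exp_ofReal_mul_I_re,
      Complex.exp_ofReal_mul_I_im, measurableEquivRealProd_symm_apply] <;> ring

/-- The Fourier slice identity: in the coordinates `x = t θ + s θ^⊥` one has
`-i (σ θ^⊥ + i μ θ)·x = μ t - i σ s`, so the inner integral over `t` is the given data. -/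
lemma slice_zero {f11 f12 f22 : ℝ × ℝ → ℝ}
    (h11 : Continuous f11) (h12 : Continuous f12) (h22 : Continuous f22)
    (hc11 : HasCompactSupport f11) (hc12 : HasCompactSupport f12)
    (hc22 : HasCompactSupport f22) {μ : ℝ}
    (hX : ∀ x θ : ℝ × ℝ, θ.1 ^ 2 + θ.2 ^ 2 = 1 →
      ∫ t : ℝ, (f11 (x + t • θ) * θ.1 ^ 2 + 2 * f12 (x + t • θ) * θ.1 * θ.2
        + f22 (x + t • θ) * θ.2 ^ 2) * Real.exp (μ * t) = 0) (σ φ : ℝ) :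
    let c : ℂ := Complex.cos φ
    let s : ℂ := Complex.sin φ
    let z₁ := -σ * s + I * μ * c
    let z₂ := σ * c + I * μ * s
    ft f11 z₁ z₂ * c ^ 2 + 2 * c * s * ft f12 z₁ z₂ + ft f22 z₁ z₂ * s ^ 2 = 0 := by
  intro c s z₁ z₂
  let E : ℝ × ℝ → ℂ := fun x => cexp (-I * (z₁ * x.1 + z₂ * x.2))
  have hE : Continuous E := by fun_prop
  let H : ℝ × ℝ → ℂ := fun x =>
    ((f11 x : ℂ) * E x) * c ^ 2 + 2 * c * s * ((f12 x : ℂ) * E x) + ((f22 x : ℂ) * E x) * s ^ 2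
  have i11 := (integrable_mul_of_hasCompactSupport h11 hc11 hE).mul_const (c ^ 2)
  have i12 := (integrable_mul_of_hasCompactSupport h12 hc12 hE).const_mul (2 * c * s)
  have i22 := (integrable_mul_of_hasCompactSupport h22 hc22 hE).mul_const (s ^ 2)
  have hHi : Integrable H := (i11.add i12).add i22
  have hH : ∫ x, H x = ft f11 z₁ z₂ * c ^ 2 + 2 * c * s * ft f12 z₁ z₂ + ft f22 z₁ z₂ * s ^ 2 := by
    simp only [H]
    have i1112 : Integrable (fun x => ((f11 x : ℂ) * E x) * c ^ 2
        + 2 * c * s * ((f12 x : ℂ) * E x)) := i11.add i12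
    rw [integral_add i1112 i22, integral_add i11 i12, integral_mul_const,
      integral_const_mul, integral_mul_const]
    rfl
  rw [← hH]
  obtain ⟨e, he, hee⟩ := exists_rotation φ
  rw [← he.integral_comp e.measurableEmbedding]
  have hHe : Integrable (fun p => H (e p)) := (he.integrable_comp_emb e.measurableEmbedding).2 hHi
  rw [Measure.volume_eq_prod, integral_prod_symm _ hHe]
  refine integral_eq_zero_of_ae (Filter.Eventually.of_forall fun u => ?_)
  have hx := hX (-u * Real.sin φ, u * Real.cos φ) (Real.cos φ, Real.sin φ)
    (Real.cos_sq_add_sin_sq φ)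
  have hx' := congrArg (fun r : ℝ => cexp (-I * σ * u) * (r : ℂ)) hx
  simp only [ofReal_zero, mul_zero] at hx'
  rw [← integral_complex_ofReal, ← integral_const_mul] at hx'
  simp only [Pi.zero_apply]
  rw [← hx']
  congr 1 with t
  have hp : e (t, u) = (-u * Real.sin φ, u * Real.cos φ) + t • (Real.cos φ, Real.sin φ) := by
    rw [hee]; ext <;> simp <;> ring
  have hEt : E (e (t, u)) = cexp (-I * σ * u) * cexp (μ * t) := by
    rw [← Complex.exp_add]
    simp only [E, hee, z₁, z₂]
    congr 1
    push_cast
    have h1 : c ^ 2 + s ^ 2 = 1 := Complex.cos_sq_add_sin_sq _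
    change -I * ((-σ * s + I * μ * c) * (t * c - u * s) + (σ * c + I * μ * s) * (t * s + u * c)) = _
    linear_combination (-I * σ * u - I ^ 2 * μ * t) * h1 - μ * t * I_sq
  simp only [H, hEt]
  rw [hp]
  push_cast
  ring

/-- Every nonzero real frequency is `σ θ^⊥ + i μ θ` for `σ = √(|ξ|² + μ²)` and a complex angle. -/
lemma exists_angle (a b μ : ℝ) (h : (a, b) ≠ (0, 0)) : ∃ σ : ℝ, σ ≠ 0 ∧ ∃ w : ℂ,
    -σ * Complex.sin w + I * μ * Complex.cos w = a ∧
    σ * Complex.cos w + I * μ * Complex.sin w = b := by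
  have hr : 0 < a ^ 2 + b ^ 2 := by
    by_contra hn
    apply h
    ext <;> simp only <;> nlinarith [sq_nonneg a, sq_nonneg b]
  have hlt : |μ| < √(a ^ 2 + b ^ 2 + μ ^ 2) := by
    apply Real.lt_sqrt_of_sq_lt; rw [sq_abs]; linarith
  obtain ⟨σ, hσ⟩ : ∃ σ, σ = √(a ^ 2 + b ^ 2 + μ ^ 2) := ⟨_, rfl⟩
  have hs2 : σ ^ 2 = a ^ 2 + b ^ 2 + μ ^ 2 := by rw [hσ]; exact Real.sq_sqrt (by positivity)
  rw [← hσ] at hlt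
  have h0 : σ ≠ 0 := ((abs_nonneg μ).trans_lt hlt).ne'
  have hp : (σ : ℂ) + μ ≠ 0 := by
    have : σ + μ ≠ 0 := by linarith [neg_abs_le μ] |> fun h : 0 < σ + μ => h.ne'
    exact_mod_cast this
  have hs2' : (σ : ℂ) ^ 2 = a ^ 2 + b ^ 2 + μ ^ 2 := by exact_mod_cast hs2
  have hab : (a : ℂ) + b * I ≠ 0 := by
    intro h'
    have h1 := congrArg Complex.re h'
    have h2 := congrArg Complex.im h'
    simp at h1 h2
    exact h (by simp [h1, h2])
  refine ⟨σ, h0, -I * Complex.log ((a + b * I) / (I * (σ + μ))), ?_⟩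
  set q : ℂ := (a + b * I) / (I * (σ + μ)) with hq
  have hq0 : q ≠ 0 := div_ne_zero hab (mul_ne_zero I_ne_zero hp)
  have e1 : cexp ((-I * Complex.log q) * I) = q := by
    rw [show (-I * Complex.log q) * I = Complex.log q by linear_combination (-Complex.log q) * I_sq]
    exact Complex.exp_log hq0
  have e2 : cexp (-(-I * Complex.log q) * I) = q⁻¹ := by
    rw [neg_mul, Complex.exp_neg, e1]
  rw [Complex.sin, Complex.cos, e1, e2]
  -- `ξ₁ + i ξ₂ = i (σ + μ) e^{iw}` and `ξ₁ - i ξ₂ = -i (σ - μ) e^{-iw}`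
  have k1 : I * (σ + μ) * q = a + b * I := by
    rw [hq]; field_simp
  have k2 : -I * (σ - μ) * q⁻¹ = a - b * I := by
    rw [← div_eq_mul_inv, div_eq_iff hq0]
    apply mul_left_cancel₀ (mul_ne_zero I_ne_zero hp)
    linear_combination (-(a - b * I)) * k1 - (σ ^ 2 - μ ^ 2 - b ^ 2) * I_sq + hs2'
  constructor
  · linear_combination k1 / 2 + k2 / 2
  · linear_combination (-I / 2) * k1 + (I / 2) * k2 - (b - σ * q / 2 - σ * q⁻¹ / 2) * I_sq

/-- injectivity of the exponential X-ray transform on C³ compactly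
supported incompressible symmetric 2-tensor fields in the plane. -/
theorem expXray_injective_incompressible
    (f11 f12 f22 : ℝ × ℝ → ℝ)
    (h11 : ContDiff ℝ 3 f11) (h12 : ContDiff ℝ 3 f12) (h22 : ContDiff ℝ 3 f22)
    (hc11 : HasCompactSupport f11) (hc12 : HasCompactSupport f12)
    (hc22 : HasCompactSupport f22)
    (hinc : ∀ x : ℝ × ℝ,
      pd1R f11 x + pd2R f12 x = 0 ∧ pd1R f12 x + pd2R f22 x = 0)
    (μ : ℝ) (hμ : 0 < μ)
    (hX : ∀ x θ : ℝ × ℝ, θ.1 ^ 2 + θ.2 ^ 2 = 1 →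
      ∫ t : ℝ, (f11 (x + t • θ) * θ.1 ^ 2 + 2 * f12 (x + t • θ) * θ.1 * θ.2
        + f22 (x + t • θ) * θ.2 ^ 2) * Real.exp (μ * t) = 0) :
    ∀ x : ℝ × ℝ, f11 x = 0 ∧ f12 x = 0 ∧ f22 x = 0 := by
  have c11 := h11.continuous
  have c12 := h12.continuous
  have c22 := h22.continuous
  have main : ∀ a b : ℝ, (a, b) ≠ (0, 0) → ft f11 a b = 0 ∧ ft f12 a b = 0 ∧ ft f22 a b = 0 := by
    intro a b hab
    obtain ⟨σ, hσ, w, hw1, hw2⟩ := exists_angle a b μ hab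
    let Z₁ : ℂ → ℂ := fun w => -σ * Complex.sin w + I * μ * Complex.cos w
    let Z₂ : ℂ → ℂ := fun w => σ * Complex.cos w + I * μ * Complex.sin w
    have d1 : ∀ w, HasDerivAt Z₁ (-σ * Complex.cos w + I * μ * -Complex.sin w) w := fun w =>
      ((Complex.hasDerivAt_sin w).const_mul _).add ((Complex.hasDerivAt_cos w).const_mul _)
    have d2 : ∀ w, HasDerivAt Z₂ (σ * -Complex.sin w + I * μ * Complex.cos w) w := fun w =>
      ((Complex.hasDerivAt_cos w).const_mul _).add ((Complex.hasDerivAt_sin w).const_mul _)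
    have dft : ∀ {f : ℝ × ℝ → ℝ}, Continuous f → HasCompactSupport f →
        Differentiable ℂ (fun w => ft f (Z₁ w) (Z₂ w)) := fun hf hc =>
      differentiable_ft hf hc d1 d2
        (by have := Complex.continuous_sin; have := Complex.continuous_cos; fun_prop)
        (by have := Complex.continuous_sin; have := Complex.continuous_cos; fun_prop)
    let G : ℂ → ℂ := fun w => ft f11 (Z₁ w) (Z₂ w) * Complex.cos w ^ 2
      + 2 * Complex.cos w * Complex.sin w * ft f12 (Z₁ w) (Z₂ w)
      + ft f22 (Z₁ w) (Z₂ w) * Complex.sin w ^ 2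
    have hG : Differentiable ℂ G := by
      have := dft c11 hc11
      have := dft c12 hc12
      have := dft c22 hc22
      have := Complex.differentiable_sin
      have := Complex.differentiable_cos
      fun_prop
    have hreal : ∀ φ : ℝ, G φ = 0 := fun φ =>
      slice_zero c11 c12 c22 hc11 hc12 hc22 hX σ φ
    -- the identity holds on the real axis, which accumulates at `0`
    have hG0 : G = 0 := by
      apply AnalyticOnNhd.eq_of_frequently_eq (z₀ := 0)
        (hG.differentiableOn.analyticOnNhd isOpen_univ) analyticOnNhd_const
      have ht : Filter.Tendsto (fun x : ℝ => (x : ℂ)) (nhdsWithin 0 {0}ᶜ)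
          (nhdsWithin 0 {0}ᶜ) := by
        refine tendsto_nhdsWithin_iff.2 ⟨?_, ?_⟩
        · exact (Complex.continuous_ofReal.tendsto' 0 0 (by simp)).mono_left nhdsWithin_le_nhds
        · filter_upwards [self_mem_nhdsWithin] with x hx
          simpa using hx
      exact ht.frequently (Filter.Eventually.of_forall hreal).frequently
    have hGw : G w = 0 := congrFun hG0 w
    simp only [G, Z₁, Z₂, hw1, hw2] at hGw
    have div_eq : ∀ {g h : ℝ × ℝ → ℝ}, ContDiff ℝ 3 g → ContDiff ℝ 3 h →
        HasCompactSupport g → HasCompactSupport h → (∀ x, pd1R g x + pd2R h x = 0) →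
        a * ft g a b + b * ft h a b = 0 := by
      intro g h hg hh hcg hch hgh
      have hg1 := ft_fderiv (hg.of_le (by norm_num)) hcg (1, 0) a b
      have hh1 := ft_fderiv (hh.of_le (by norm_num)) hch (0, 1) a b
      have : ft (fun x => fderiv ℝ g x (1, 0)) a b = - ft (fun x => fderiv ℝ h x (0, 1)) a b := by
        rw [ft, ft, ← integral_neg]
        congr 1 with x
        have := hgh x
        rw [pd1R, pd2R, ← eq_neg_iff_add_eq_zero] at this
        rw [this]; push_cast; ring
      rw [hg1, hh1] at this
      apply mul_left_cancel₀ I_ne_zero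
      simp only [ofReal_one, ofReal_zero] at this
      linear_combination this
    have e1 := div_eq h11 h12 hc11 hc12 fun x => (hinc x).1
    have e2 := div_eq h12 h22 hc12 hc22 fun x => (hinc x).2
    have hcs := Complex.cos_sq_add_sin_sq w
    have hσ2 : (σ : ℂ) ^ 2 ≠ 0 := pow_ne_zero 2 (ofReal_ne_zero.2 hσ)
    -- `θ·ξ^⊥` up to sign
    have hcb : b * Complex.cos w - a * Complex.sin w = σ := by
      rw [← hw1, ← hw2]; linear_combination σ * hcs
    have hcb2 : (b * Complex.cos w - a * Complex.sin w) ^ 2 = (σ : ℂ) ^ 2 := by rw [hcb]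
    generalize Complex.cos w = c at *
    generalize Complex.sin w = s at *
    generalize ft f11 a b = A at *
    generalize ft f12 a b = B at *
    generalize ft f22 a b = D at *
    refine ⟨?_, ?_, ?_⟩ <;> apply mul_left_cancel₀ hσ2
    · linear_combination (b : ℂ) ^ 2 * hGw - A * hcb2 - (2 * c * s * b - s ^ 2 * a) * e1
        - s ^ 2 * b * e2
    · linear_combination (-(a * b) : ℂ) * hGw - B * hcb2 + c ^ 2 * b * e1 + s ^ 2 * a * e2
    · linear_combination (a : ℂ) ^ 2 * hGw - D * hcb2 - (2 * c * s * a - c ^ 2 * b) * e2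
        - c ^ 2 * a * e1
  intro x
  exact ⟨eq_zero_of_ft c11 hc11 (fun a b h => (main a b h).1) x,
    eq_zero_of_ft c12 hc12 (fun a b h => (main a b h).2.1) x,
    eq_zero_of_ft c22 hc22 (fun a b h => (main a b h).2.2) x⟩
end

section
/- Let F = (f₁₁, f₁₂; f₁₂, f₂₂) be a symmetric 2-tensor field on ℝ² of class C³ with compact support which is trace-free, i.e. f₁₁ + f₂₂ = 0 everywhere, and let μ > 0. If the exponential X-ray transform X_μF(x,θ) = ∫_ℝ ⟨F(x+tθ)θ,θ⟩ e^{μt} dt vanishes for every x ∈ ℝ² and every unit vector θ, then F = 0 identically. (Equivalently, the data X_μF uniquely determines a trace-free symmetric 2-tensor field in this class.) -/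
/-! The proof is a Fourier argument. For a planar function `g` write
`T g a b = ∫ g(y) exp (a y₁ + b y₂) dy`, an entire function of `(a, b) ∈ ℂ²` when `g` is continuous
with compact support. Since `f₂₂ = -f₁₁`, we have
`⟨Fθ, θ⟩ = f₁₁ cos 2φ + f₁₂ sin 2φ`. Integrating the vanishing exponential X-ray transform against
`exp (i σ s)` over the lines `s θ^⊥ + ℝ θ` gives a Fourier slice identity
(`slice_real`): for real `σ` and `φ`,

  `cos 2φ · T f₁₁ ζ + sin 2φ · T f₁₂ ζ = 0`,  where `ζ = μ θ + i σ θ^⊥`.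

The left side is entire in `φ`, so the identity holds for complex `φ` as well (`slice_complex`).
For a real frequency `ξ ≠ 0`, the equation `μ θ + i σ θ^⊥ = i ξ` with `cos² + sin² = 1` forces
`σ² = μ² + |ξ|²`. Its two solutions `σ = ±√(μ² + |ξ|²)` each come with a complex angle, hence give
two linear equations for `T f₁₁ (i ξ)` and `T f₁₂ (i ξ)`. Their determinant is nonzero precisely
because `μ ≠ 0` (`transform_eq_zero`). So both Fourier transforms vanish away from the origin, and
Fourier inversion finishes the proof (`eq_zero_of_transform`). The plane is identified with `ℂ`
throughout, which makes rotations and the inner product available.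
-/


open Complex MeasureTheory

/-- The bilateral Laplace (complex-frequency Fourier) transform of a function on the plane
`ℂ ≃ ℝ²`, at the complex frequency `(a, b) ∈ ℂ²`. -/
noncomputable def planeLaplace (g : ℂ → ℂ) (a b : ℂ) : ℂ :=
  ∫ z : ℂ, g z * cexp (z.re * a + z.im * b)

lemma planeLaplace_integrable {g : ℂ → ℂ} (hg : Continuous g) (hc : HasCompactSupport g) (a b : ℂ) :
    Integrable (fun z : ℂ => g z * cexp (z.re * a + z.im * b)) := by
  apply Continuous.integrable_of_hasCompactSupport
  · fun_prop
  · exact hc.mul_right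

lemma planeLaplace_differentiable {g : ℂ → ℂ} (hg : Continuous g) (hc : HasCompactSupport g)
    {a b a' b' : ℂ → ℂ} (ha : ∀ w, HasDerivAt a (a' w) w) (hb : ∀ w, HasDerivAt b (b' w) w)
    (ha' : Continuous a') (hb' : Continuous b') :
    Differentiable ℂ (fun w => planeLaplace g (a w) (b w)) := by
  intro w₀
  have hac : Continuous a := continuous_iff_continuousAt.2 fun w => (ha w).continuousAt
  have hbc : Continuous b := continuous_iff_continuousAt.2 fun w => (hb w).continuousAt
  let A' : ℂ → ℂ → ℂ := fun w z =>
    cexp (z.re * a w + z.im * b w) * (z.re * a' w + z.im * b' w)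
  have hA' : Continuous (fun p : ℂ × ℂ => A' p.1 p.2) := by
    simp only [A']; fun_prop
  obtain ⟨C, hC⟩ := ((isCompact_closedBall w₀ 1).prod hc.isCompact).exists_bound_of_continuousOn
    hA'.continuousOn
  refine (hasDerivAt_integral_of_dominated_loc_of_deriv_le
    (F := fun w z => g z * cexp (z.re * a w + z.im * b w))
    (F' := fun w z => g z * A' w z)
    (bound := fun z => ‖g z‖ * C)
    (Metric.closedBall_mem_nhds w₀ one_pos) ?_ ?_ ?_ ?_ ?_ ?_).2.differentiableAt
  · exact Filter.Eventually.of_forall fun w =>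
      (planeLaplace_integrable hg hc (a w) (b w)).aestronglyMeasurable
  · exact planeLaplace_integrable hg hc _ _
  · apply Continuous.aestronglyMeasurable
    simp only [A']; fun_prop
  · refine Filter.Eventually.of_forall fun z w hw => ?_
    rw [norm_mul]
    by_cases hz : z ∈ tsupport g
    · exact mul_le_mul_of_nonneg_left (hC (w, z) ⟨hw, hz⟩) (norm_nonneg _)
    · simp [image_eq_zero_of_notMem_tsupport hz]
  · exact (hg.integrable_of_hasCompactSupport hc).norm.mul_const C
  · refine Filter.Eventually.of_forall fun z w _ => ?_
    exact ((((ha w).const_mul (z.re : ℂ)).add ((hb w).const_mul (z.im : ℂ))).cexp).const_mul (g z)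

/-- Fourier slice identity: integrate the vanishing X-ray data in direction
`θ = (cos φ, sin φ)` against `exp (i σ s)` over the lines through `s θ^⊥`. -/
lemma slice_real {g h : ℝ × ℝ → ℝ} (hg : Continuous g) (hh : Continuous h)
    (hgc : HasCompactSupport (fun z : ℂ => (g (z.re, z.im) : ℂ)))
    (hhc : HasCompactSupport (fun z : ℂ => (h (z.re, z.im) : ℂ))) {μ : ℝ}
    (hX : ∀ x θ : ℝ × ℝ, θ.1 ^ 2 + θ.2 ^ 2 = 1 →
      ∫ t : ℝ, (g (x + t • θ) * (θ.1 ^ 2 - θ.2 ^ 2) + h (x + t • θ) * (2 * θ.1 * θ.2))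
        * Real.exp (μ * t) = 0) (σ φ : ℝ) :
    Complex.cos (2 * φ) * planeLaplace (fun z : ℂ => (g (z.re, z.im) : ℂ))
        (μ * Complex.cos φ - I * σ * Complex.sin φ) (μ * Complex.sin φ + I * σ * Complex.cos φ) +
      Complex.sin (2 * φ) * planeLaplace (fun z : ℂ => (h (z.re, z.im) : ℂ))
        (μ * Complex.cos φ - I * σ * Complex.sin φ) (μ * Complex.sin φ + I * σ * Complex.cos φ)
      = 0 := by
  set a : ℂ := μ * Complex.cos φ - I * σ * Complex.sin φ with ha
  set b : ℂ := μ * Complex.sin φ + I * σ * Complex.cos φ with hb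
  have ig := planeLaplace_integrable (g := fun z : ℂ => (g (z.re, z.im) : ℂ))
    (by fun_prop) hgc a b
  have ih := planeLaplace_integrable (g := fun z : ℂ => (h (z.re, z.im) : ℂ))
    (by fun_prop) hhc a b
  have iF := (ig.const_mul (Complex.cos (2 * φ))).add (ih.const_mul (Complex.sin (2 * φ)))
  unfold planeLaplace
  rw [← integral_const_mul, ← integral_const_mul,
    ← integral_add (ig.const_mul _) (ih.const_mul _)]
  -- rotate so that the first coordinate runs along `θ` and the second along `θ^⊥`
  let R := rotation (Circle.exp φ)
  have hR := R.measurePreserving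
  have hRe : MeasurableEmbedding R := R.toHomeomorph.measurableEmbedding
  have hP := Complex.volume_preserving_equiv_real_prod.symm
  rw [← hR.integral_comp hRe, ← hP.integral_comp (MeasurableEquiv.measurableEmbedding _)]
  have iF2 := (hP.integrable_comp_emb (MeasurableEquiv.measurableEmbedding _)).2
    ((hR.integrable_comp_emb hRe).2 iF)
  rw [Measure.volume_eq_prod] at iF2 ⊢
  refine (integral_prod_symm _ iF2).trans ?_
  refine integral_eq_zero_of_ae (Filter.Eventually.of_forall fun s => ?_)
  have key := hX (-(s * Real.sin φ), s * Real.cos φ) (Real.cos φ, Real.sin φ)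
    (Real.cos_sq_add_sin_sq φ)
  have key2 := congrArg (fun r : ℝ => (r : ℂ) * cexp (I * σ * s)) key
  simp only [ofReal_zero, zero_mul] at key2
  rw [← integral_complex_ofReal, ← integral_mul_const] at key2
  simp only [Pi.zero_apply]
  rw [← key2]
  refine integral_congr_ae (Filter.Eventually.of_forall fun t => ?_)
  have h1 : R (Complex.measurableEquivRealProd.symm (t, s)) =
      ⟨-(s * Real.sin φ) + t * Real.cos φ, s * Real.cos φ + t * Real.sin φ⟩ := by
    simp only [R, rotation_apply, Circle.coe_exp, Complex.measurableEquivRealProd_symm_apply]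
    apply Complex.ext
    · simp [Complex.exp_ofReal_mul_I_re, Complex.exp_ofReal_mul_I_im]; ring
    · simp [Complex.exp_ofReal_mul_I_re, Complex.exp_ofReal_mul_I_im]; ring
  have hcs : Complex.sin φ ^ 2 = 1 - Complex.cos φ ^ 2 := by
    have := Complex.sin_sq_add_cos_sq (φ : ℂ); linear_combination this
  have hexp : cexp (((-(s * Real.sin φ) + t * Real.cos φ : ℝ) : ℂ) * a
      + ((s * Real.cos φ + t * Real.sin φ : ℝ) : ℂ) * b)
      = cexp (μ * t) * cexp (I * σ * s) := by
    rw [← Complex.exp_add, ha, hb]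
    congr 1
    push_cast
    linear_combination ((μ : ℂ) * t + I * σ * s) * hcs
  simp only [Function.comp_apply, Pi.add_apply, h1, hexp, Prod.smul_mk, Prod.mk_add_mk, smul_eq_mul]
  push_cast
  rw [Complex.cos_two_mul, Complex.sin_two_mul]
  linear_combination ((g (-(s * Real.sin φ) + t * Real.cos φ, s * Real.cos φ + t * Real.sin φ) : ℂ))
    * cexp (μ * t) * cexp (I * σ * s) * hcs

/-- The slice identity for complex angles, by analytic continuation in `φ`. -/
lemma slice_complex {g h : ℂ → ℂ} (hg : Continuous g) (hh : Continuous h)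
    (hgc : HasCompactSupport g) (hhc : HasCompactSupport h) {μ σ : ℝ}
    (hreal : ∀ φ : ℝ,
      Complex.cos (2 * φ) * planeLaplace g (μ * Complex.cos φ - I * σ * Complex.sin φ)
          (μ * Complex.sin φ + I * σ * Complex.cos φ) +
        Complex.sin (2 * φ) * planeLaplace h (μ * Complex.cos φ - I * σ * Complex.sin φ)
          (μ * Complex.sin φ + I * σ * Complex.cos φ) = 0) (φ : ℂ) :
    Complex.cos (2 * φ) * planeLaplace g (μ * Complex.cos φ - I * σ * Complex.sin φ)
          (μ * Complex.sin φ + I * σ * Complex.cos φ) +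
        Complex.sin (2 * φ) * planeLaplace h (μ * Complex.cos φ - I * σ * Complex.sin φ)
          (μ * Complex.sin φ + I * σ * Complex.cos φ) = 0 := by
  have ha : ∀ w : ℂ, HasDerivAt (fun w => μ * Complex.cos w - I * σ * Complex.sin w)
      (μ * -Complex.sin w - I * σ * Complex.cos w) w := fun w =>
    ((Complex.hasDerivAt_cos w).const_mul _).sub ((Complex.hasDerivAt_sin w).const_mul _)
  have hb : ∀ w : ℂ, HasDerivAt (fun w => μ * Complex.sin w + I * σ * Complex.cos w)
      (μ * Complex.cos w + I * σ * -Complex.sin w) w := fun w =>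
    ((Complex.hasDerivAt_sin w).const_mul _).add ((Complex.hasDerivAt_cos w).const_mul _)
  have dg := planeLaplace_differentiable hg hgc ha hb
    (by fun_prop) (by fun_prop)
  have dh := planeLaplace_differentiable hh hhc ha hb
    (by fun_prop) (by fun_prop)
  have dF : Differentiable ℂ (fun φ : ℂ =>
      Complex.cos (2 * φ) * planeLaplace g (μ * Complex.cos φ - I * σ * Complex.sin φ)
          (μ * Complex.sin φ + I * σ * Complex.cos φ) +
        Complex.sin (2 * φ) * planeLaplace h (μ * Complex.cos φ - I * σ * Complex.sin φ)
          (μ * Complex.sin φ + I * σ * Complex.cos φ)) := by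
    fun_prop
  -- the real axis accumulates at `0`, so an entire function vanishing on it is zero
  have hfreq : ∃ᶠ w in nhdsWithin (0 : ℂ) {0}ᶜ,
      Complex.cos (2 * w) * planeLaplace g (μ * Complex.cos w - I * σ * Complex.sin w)
          (μ * Complex.sin w + I * σ * Complex.cos w) +
        Complex.sin (2 * w) * planeLaplace h (μ * Complex.cos w - I * σ * Complex.sin w)
          (μ * Complex.sin w + I * σ * Complex.cos w) = (fun _ : ℂ => (0 : ℂ)) w := by
    have ht : Filter.Tendsto (fun t : ℝ => (t : ℂ)) (nhdsWithin (0 : ℝ) {0}ᶜ)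
        (nhdsWithin (0 : ℂ) {0}ᶜ) := by
      refine tendsto_nhdsWithin_iff.2 ⟨?_, ?_⟩
      · exact (Complex.continuous_ofReal.tendsto' 0 0 (by simp)).mono_left nhdsWithin_le_nhds
      · filter_upwards [self_mem_nhdsWithin] with t ht
        simpa using ht
    exact ht.frequently (Filter.Eventually.of_forall fun t : ℝ => hreal t).frequently
  have := AnalyticOnNhd.eq_of_frequently_eq
    (Complex.analyticOnNhd_univ_iff_differentiable.2 dF)
    (Complex.analyticOnNhd_univ_iff_differentiable.2 (differentiable_const (0 : ℂ))) hfreq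
  exact congrFun this φ

/-- Every point of the complexified unit circle is given by a complex angle. -/
lemma exists_angle_s1 {c d : ℂ} (h : c ^ 2 + d ^ 2 = 1) :
    ∃ φ : ℂ, Complex.cos φ = c ∧ Complex.sin φ = d := by
  have hw : (c + I * d) * (c - I * d) = 1 := by
    linear_combination h - d ^ 2 * Complex.I_sq
  have hne : c + I * d ≠ 0 := left_ne_zero_of_mul_eq_one hw
  refine ⟨-I * Complex.log (c + I * d), ?_⟩
  have e1 : cexp (-I * Complex.log (c + I * d) * I) = c + I * d := by
    rw [show -I * Complex.log (c + I * d) * I = Complex.log (c + I * d) by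
      linear_combination -Complex.log (c + I * d) * Complex.I_sq, Complex.exp_log hne]
  have e2 : cexp (-(-I * Complex.log (c + I * d)) * I) = c - I * d := by
    rw [neg_mul, Complex.exp_neg, e1]
    exact inv_eq_of_mul_eq_one_right hw
  constructor
  · rw [Complex.cos, e1, e2]; ring
  · rw [Complex.sin, e1, e2]; linear_combination -d * Complex.I_sq

/-- Both transforms vanish at every nonzero purely imaginary frequency `i ξ`: the slice identities
for `σ = ±√(μ² + |ξ|²)` are independent. -/
lemma transform_eq_zero {μ : ℝ} (hμ : 0 < μ) {P Q : ℂ → ℂ → ℂ}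
    (hPQ : ∀ (σ : ℝ) (φ : ℂ),
      Complex.cos (2 * φ) * P (μ * Complex.cos φ - I * σ * Complex.sin φ)
          (μ * Complex.sin φ + I * σ * Complex.cos φ) +
        Complex.sin (2 * φ) * Q (μ * Complex.cos φ - I * σ * Complex.sin φ)
          (μ * Complex.sin φ + I * σ * Complex.cos φ) = 0)
    (x y : ℝ) (hxy : x ^ 2 + y ^ 2 ≠ 0) :
    P (I * x) (I * y) = 0 ∧ Q (I * x) (I * y) = 0 := by
  set N : ℂ := (x : ℂ) ^ 2 + (y : ℂ) ^ 2 with hN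
  have hN0 : N ≠ 0 := by rw [hN]; exact_mod_cast hxy
  have main : ∀ σ : ℝ, σ ^ 2 = μ ^ 2 + (x ^ 2 + y ^ 2) →
      (((σ : ℂ) * y - I * μ * x) ^ 2 - (I * μ * y + σ * x) ^ 2) * P (I * x) (I * y)
        - 2 * (σ * y - I * μ * x) * (I * μ * y + σ * x) * Q (I * x) (I * y) = 0 := by
    intro σ hσ
    have hσ' : (σ : ℂ) ^ 2 = μ ^ 2 + N := by rw [hN]; exact_mod_cast hσ
    obtain ⟨φ, hc, hs⟩ := exists_angle_s1 (c := (σ * y - I * μ * x) / N)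
      (d := -(I * μ * y + σ * x) / N) (by
        field_simp
        rw [hN] at hσ' ⊢
        linear_combination ((x : ℂ) ^ 2 + y ^ 2) * hσ' +
          ((μ : ℂ) ^ 2 * (x ^ 2 + y ^ 2)) * Complex.I_sq)
    have e := hPQ σ φ
    have h1 : (μ : ℂ) * Complex.cos φ - I * σ * Complex.sin φ = I * x := by
      rw [hc, hs]
      field_simp
      rw [hN] at hσ' ⊢
      linear_combination I * x * hσ' + (σ : ℂ) * y * μ * Complex.I_sq
    have h2 : (μ : ℂ) * Complex.sin φ + I * σ * Complex.cos φ = I * y := by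
      rw [hc, hs]
      field_simp
      rw [hN] at hσ' ⊢
      linear_combination I * y * hσ' - (σ : ℂ) * x * μ * Complex.I_sq
    rw [h1, h2, Complex.cos_two_mul', Complex.sin_two_mul, hc, hs] at e
    generalize P (I * x) (I * y) = p, Q (I * x) (I * y) = q at e ⊢
    field_simp at e
    linear_combination e
  set s : ℝ := Real.sqrt (μ ^ 2 + (x ^ 2 + y ^ 2)) with hs
  have hspos : 0 < s := Real.sqrt_pos.2 (by positivity)
  have hs2 : s ^ 2 = μ ^ 2 + (x ^ 2 + y ^ 2) := Real.sq_sqrt (by positivity)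
  have m1 := main s hs2
  have m2 := main (-s) (by rw [neg_sq]; exact hs2)
  push_cast at m2
  have hodd : 2 * (x : ℂ) * y * P (I * x) (I * y) + (y ^ 2 - x ^ 2) * Q (I * x) (I * y) = 0 := by
    have hk : (-4 * I * s * μ : ℂ) ≠ 0 := by
      simp [hspos.ne', hμ.ne']
    refine (mul_eq_zero.1 ?_).resolve_left hk
    linear_combination m1 - m2
  have heven : (y ^ 2 - x ^ 2) * P (I * x) (I * y) - 2 * (x : ℂ) * y * Q (I * x) (I * y) = 0 := by
    have hk : (2 * ((s : ℂ) ^ 2 + μ ^ 2)) ≠ 0 := by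
      have : 0 < 2 * (s ^ 2 + μ ^ 2) := by positivity
      exact_mod_cast this.ne'
    refine (mul_eq_zero.1 ?_).resolve_left hk
    linear_combination m1 + m2 - 2 * (μ : ℂ) ^ 2 * ((x ^ 2 - y ^ 2) * P (I * x) (I * y)
      + 2 * (x : ℂ) * y * Q (I * x) (I * y)) * Complex.I_sq
  constructor
  · refine (mul_eq_zero.1 ?_).resolve_left (pow_ne_zero 2 hN0)
    rw [hN]
    linear_combination 2 * (x : ℂ) * y * hodd + (y ^ 2 - x ^ 2) * heven
  · refine (mul_eq_zero.1 ?_).resolve_left (pow_ne_zero 2 hN0)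
    rw [hN]
    linear_combination (y ^ 2 - x ^ 2) * hodd - 2 * (x : ℂ) * y * heven

open FourierTransform in
/-- A continuous compactly supported function whose Fourier transform vanishes off the origin
is zero. -/
lemma eq_zero_of_transform {g : ℂ → ℂ} (hg : Continuous g) (hc : HasCompactSupport g)
    (h0 : ∀ x y : ℝ, x ^ 2 + y ^ 2 ≠ 0 → planeLaplace g (I * x) (I * y) = 0) : g = 0 := by
  have hF : ∀ w : ℂ, w ≠ 0 → 𝓕 g w = 0 := by
    intro w hw
    rw [Real.fourier_eq']
    have hpos : w.re ^ 2 + w.im ^ 2 ≠ 0 := by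
      have : Complex.normSq w ≠ 0 := by simpa using hw
      rw [Complex.normSq_apply] at this
      intro h; exact this (by linear_combination h)
    have := h0 (-2 * Real.pi * w.re) (-2 * Real.pi * w.im) (by
      rw [show (-2 * Real.pi * w.re) ^ 2 + (-2 * Real.pi * w.im) ^ 2
        = (-2 * Real.pi) ^ 2 * (w.re ^ 2 + w.im ^ 2) by ring]
      exact mul_ne_zero (pow_ne_zero 2 (by simp [Real.pi_ne_zero])) hpos)
    rw [← this, planeLaplace]
    refine integral_congr_ae (Filter.Eventually.of_forall fun z => ?_)
    simp only [smul_eq_mul]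
    rw [mul_comm]
    congr 2
    rw [Complex.inner]
    simp
    ring
  have hae : 𝓕 g =ᵐ[volume] 0 := by
    filter_upwards [compl_mem_ae_iff.2 (measure_singleton (0 : ℂ))] with w hw
    exact hF w hw
  rw [← hg.fourierInv_fourier_eq (hg.integrable_of_hasCompactSupport hc)
    ((integrable_zero ℂ ℂ volume).congr hae.symm)]
  ext v
  rw [Real.fourierInv_eq]
  refine integral_eq_zero_of_ae ?_
  filter_upwards [hae] with w hw
  rw [hw]; simp

/-- injectivity of the exponential X-ray transform on C³ compactly
supported trace-free symmetric 2-tensor fields in the plane. -/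
theorem expXray_injective_traceFree
    (f11 f12 f22 : ℝ × ℝ → ℝ)
    (h11 : ContDiff ℝ 3 f11) (h12 : ContDiff ℝ 3 f12) (h22 : ContDiff ℝ 3 f22)
    (hc11 : HasCompactSupport f11) (hc12 : HasCompactSupport f12)
    (hc22 : HasCompactSupport f22)
    (htr : ∀ x : ℝ × ℝ, f11 x + f22 x = 0)
    (μ : ℝ) (hμ : 0 < μ)
    (hX : ∀ x θ : ℝ × ℝ, θ.1 ^ 2 + θ.2 ^ 2 = 1 →
      ∫ t : ℝ, (f11 (x + t • θ) * θ.1 ^ 2 + 2 * f12 (x + t • θ) * θ.1 * θ.2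
        + f22 (x + t • θ) * θ.2 ^ 2) * Real.exp (μ * t) = 0) :
    ∀ x : ℝ × ℝ, f11 x = 0 ∧ f12 x = 0 ∧ f22 x = 0 := by
  have toC : ∀ f : ℝ × ℝ → ℝ, HasCompactSupport f →
      HasCompactSupport (fun z : ℂ => (f (z.re, z.im) : ℂ)) := by
    intro f hf
    have h1 := hf.comp_homeomorph Complex.equivRealProdCLM.toHomeomorph
    exact h1.comp_left (g := fun r : ℝ => (r : ℂ)) Complex.ofReal_zero
  have c11 := h11.continuous
  have c12 := h12.continuous
  have hgc := toC f11 hc11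
  have hhc := toC f12 hc12
  have hX' : ∀ x θ : ℝ × ℝ, θ.1 ^ 2 + θ.2 ^ 2 = 1 →
      ∫ t : ℝ, (f11 (x + t • θ) * (θ.1 ^ 2 - θ.2 ^ 2) + f12 (x + t • θ) * (2 * θ.1 * θ.2))
        * Real.exp (μ * t) = 0 := by
    intro x θ hθ
    rw [← hX x θ hθ]
    congr 1
    ext t
    linear_combination (-θ.2 ^ 2 * Real.exp (μ * t)) * htr (x + t • θ)
  have cg : Continuous (fun z : ℂ => (f11 (z.re, z.im) : ℂ)) := by fun_prop
  have ch : Continuous (fun z : ℂ => (f12 (z.re, z.im) : ℂ)) := by fun_prop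
  have hz := transform_eq_zero hμ (fun σ => slice_complex cg ch hgc hhc
    (slice_real c11 c12 hgc hhc hX' σ))
  have z11 := eq_zero_of_transform cg hgc fun x y hxy => (hz x y hxy).1
  have z12 := eq_zero_of_transform ch hhc fun x y hxy => (hz x y hxy).2
  intro x
  have e11 : f11 x = 0 := by simpa using congrFun z11 ⟨x.1, x.2⟩
  have e12 : f12 x = 0 := by simpa using congrFun z12 ⟨x.1, x.2⟩
  exact ⟨e11, e12, by linarith [htr x]⟩
end
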